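/- For every satisfiable 3-SAT instance φ and every integer h > 1, the graph G = reduction(φ,h) admits a v-concentrated tree 7-spanner, where v is the central vertex of the initial path of the construction. -/

import Mathlib

/-! The tree is a breadth-first search tree rooted at the central vertex `v`, given by a parent
function chosen from a satisfying assignment `a`. In the block `b`, a variable vertex `x^b` hangs
from `v_⊕^b` if `a x` is true and from `v_⊖^b` otherwise; an occurrence vertex `x_c^b` hangs from
its only neighbour among these two; and, choosing in each clause `c` a literal on some variable `y`
that `a` makes true, `q_{l,c}^b` hangs from whichever of `y^b`, `y_c^b` is adjacent to it (the rows
of `M` come in complementary pairs, so exactly one is).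

*Concentration.* Every edge of the graph changes `level` by one and the parent function lowers it by
one, so `level` is the distance from `v`; hence every ball around `v` is closed under taking parents
(`isConcentrated_parentGraph`).

*Stretch.* Since the chosen literal is true, `y^b` and `y_c^b` have the same parent. So all `q_{l,c}^b`
have the same grandparent and are pairwise at tree distance at most `4`. The vertices `v_⊕`, `v_⊖` of
each block are two such vertices, or the ends of the initial path, so they too are at tree distance
at most `4` (`dist_vplus_vminus`). A graph edge outside the tree joins some `g_k` either to `v_⊕`
or `v_⊖`, giving at most `1 + 4`, or to a `q_l`, giving at most `1 + 4 + 2 = 7`. -/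

open SimpleGraph

/-- A 3-SAT clause on Boolean variables indexed by naturals: variables `v1,v2,v3`
with polarities `p1,p2,p3` (`true` = the variable appears positively). -/
structure Clause3 where
  v1 : ℕ
  v2 : ℕ
  v3 : ℕ
  p1 : Bool
  p2 : Bool
  p3 : Bool
deriving DecidableEq

/-- A 3-SAT instance: a nonempty finite set of clauses, each on 3 distinct variables. -/
structure SAT3 where
  clauses : Finset Clause3
  nonempty : clauses.Nonempty
  distinct : ∀ c ∈ clauses, c.v1 ≠ c.v2 ∧ c.v1 ≠ c.v3 ∧ c.v2 ≠ c.v3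

/-- The variables of a 3-SAT instance. -/
def SAT3.vars (φ : SAT3) : Finset ℕ :=
  φ.clauses.biUnion (fun c => {c.v1, c.v2, c.v3})

/-- A truth assignment satisfies a clause if some literal is made true. -/
def Clause3.satisfiedBy (c : Clause3) (a : ℕ → Bool) : Prop :=
  a c.v1 = c.p1 ∨ a c.v2 = c.p2 ∨ a c.v3 = c.p3

/-- A truth assignment satisfies an instance if it satisfies every clause. -/
def SAT3.satisfiedBy (φ : SAT3) (a : ℕ → Bool) : Prop :=
  ∀ c ∈ φ.clauses, c.satisfiedBy a

/-- `x` is one of the three variables of clause `c`. -/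
def Clause3.hasVar (c : Clause3) (x : ℕ) : Prop :=
  x = c.v1 ∨ x = c.v2 ∨ x = c.v3

/-- The 6 × 8 matrix `M` of the construction. -/
def Mmat : Fin 6 → Fin 8 → Bool :=
  ![![true, true, true, true, false, false, false, false],
    ![false, false, false, false, true, true, true, true],
    ![true, true, false, false, true, true, false, false],
    ![false, false, true, true, false, false, true, true],
    ![true, false, true, false, true, false, true, false],
    ![false, true, false, true, false, true, false, true]]

/-- The address of a building block: the (clause, index `r`) choices along the chain of
attachments leading from the root block `G^{1,1}` (address `[]`) to this block; the head of
the list is the most recent attachment.  A block of address `b` lies in layer `b.length + 1`. -/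
abbrev BlockAddr : Type := List (Clause3 × Fin 7)

/-- The ambient vertices of the reduction graph: the five vertices `q1, p1, v, p2, q2` of the
initial path, and for each building block address `b`: the variable vertices `x^b`, the
clause-occurrence vertices `x_c^b`, and the vertices `q_{r,c}^b`.  The vertices
`v_⊕^b, v_⊖^b` of a block are identified with vertices of its parent (see `vplus`, `vminus`). -/
inductive RVert where
  | qp : RVert
  | pp : RVert
  | vv : RVert
  | pm : RVert
  | qm : RVert
  | var : BlockAddr → ℕ → RVert
  | varC : BlockAddr → Clause3 → ℕ → RVert
  | q : BlockAddr → Clause3 → Fin 8 → RVert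

/-- The vertex `v_⊕` of the block with address `b` (an identified vertex of the parent). -/
def vplus : BlockAddr → RVert
  | [] => RVert.qp
  | (c, r) :: b => RVert.q b c r.castSucc

/-- The vertex `v_⊖` of the block with address `b` (an identified vertex of the parent). -/
def vminus : BlockAddr → RVert
  | [] => RVert.qm
  | (c, r) :: b => RVert.q b c r.succ

/-- The group of six vertices `g = (y^b, y_c^b, z^b, z_c^b, w^b, w_c^b)` for clause `c`
with variables `y,z,w` in block `b`. -/
def gvec (b : BlockAddr) (c : Clause3) : Fin 6 → RVert :=
  ![RVert.var b c.v1, RVert.varC b c c.v1,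
    RVert.var b c.v2, RVert.varC b c c.v2,
    RVert.var b c.v3, RVert.varC b c c.v3]

/-- The block with address `b` is present in `reduction(φ, h)`. -/
def validBlock (φ : SAT3) (h : ℕ) (b : BlockAddr) : Prop :=
  b.length + 1 ≤ h ∧ ∀ p ∈ b, p.1 ∈ φ.clauses

/-- The vertices of `reduction(φ, h)` among the ambient vertices. -/
def validVert (φ : SAT3) (h : ℕ) : RVert → Prop
  | RVert.qp => True
  | RVert.pp => True
  | RVert.vv => True
  | RVert.pm => True
  | RVert.qm => True
  | RVert.var b x => validBlock φ h b ∧ x ∈ φ.vars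
  | RVert.varC b c x => validBlock φ h b ∧ c ∈ φ.clauses ∧ c.hasVar x
  | RVert.q b c _ => validBlock φ h b ∧ c ∈ φ.clauses

/-- The edges of the reduction graph (to be symmetrized): the 4 path edges; the edges
`x^b v_⊕^b`, `x^b v_⊖^b`; the edges between the group of six and the `q` vertices given by
the matrix `M`; and the polarity edges, joining `x_c^b` to `v_⊕^b` when `x` occurs
positively in `c` and to `v_⊖^b` otherwise. -/
def baseAdj (u w : RVert) : Prop :=
  (u = RVert.qp ∧ w = RVert.pp) ∨
  (u = RVert.pp ∧ w = RVert.vv) ∨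
  (u = RVert.vv ∧ w = RVert.pm) ∨
  (u = RVert.pm ∧ w = RVert.qm) ∨
  (∃ b x, u = RVert.var b x ∧ (w = vplus b ∨ w = vminus b)) ∨
  (∃ b c k l, Mmat k l = true ∧ u = gvec b c k ∧ w = RVert.q b c l) ∨
  (∃ (b : BlockAddr) (c : Clause3),
    (u = RVert.varC b c c.v1 ∧ w = (if c.p1 then vplus b else vminus b)) ∨
    (u = RVert.varC b c c.v2 ∧ w = (if c.p2 then vplus b else vminus b)) ∨
    (u = RVert.varC b c c.v3 ∧ w = (if c.p3 then vplus b else vminus b)))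

/-- The vertex type of the graph `reduction(φ, h)`. -/
abbrev RedVert (φ : SAT3) (h : ℕ) : Type := {x : RVert // validVert φ h x}

/-- The graph `G = reduction(φ, h)` of the construction. -/
def reductionGraph (φ : SAT3) (h : ℕ) : SimpleGraph (RedVert φ h) :=
  SimpleGraph.comap Subtype.val (SimpleGraph.fromRel baseAdj)

/-- The central vertex `v` of the initial path of `reduction(φ, h)`. -/
def centralVert (φ : SAT3) (h : ℕ) : RedVert φ h := ⟨RVert.vv, trivial⟩

/-- `T` is a tree `t`-spanner of `G`: a spanning tree of `G` all whose distances are within a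
factor `t` of those of `G`. -/
def IsTreeSpanner {V : Type*} (G T : SimpleGraph V) (t : ℕ) : Prop :=
  T ≤ G ∧ T.IsTree ∧ ∀ u w : V, T.dist u w ≤ t * G.dist u w

/-- A spanning tree `T` of `G` is `v`-concentrated if for every `i ≥ 0` the subgraph of `T`
induced by the ball `N_G^i[v]` is connected. -/
def IsConcentrated {V : Type*} (G T : SimpleGraph V) (v : V) : Prop :=
  ∀ i : ℕ, (T.induce {x : V | G.dist v x ≤ i}).Connected

/-! ### Trees given by a parent function -/

section ParentGraph

variable {V : Type*}

/-- The graph joining each vertex to its parent; a root is a fixed point of `par`. -/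
def parentGraph (par : V → V) : SimpleGraph V := SimpleGraph.fromRel (fun x y => y = par x)

variable {par : V → V} {r : V} {lev : V → ℕ}

theorem parentGraph_adj_par (hlev : ∀ x, x ≠ r → lev (par x) + 1 = lev x) {x : V} (hx : x ≠ r) :
    (parentGraph par).Adj x (par x) := by
  refine (SimpleGraph.fromRel_adj _ _ _).2 ⟨fun h => ?_, Or.inl rfl⟩
  have := hlev x hx
  rw [← h] at this
  omega

/-- Following parents from `x` reaches the root within `lev x` steps. -/
theorem exists_walk_root (hr : lev r = 0) (hlev : ∀ x, x ≠ r → lev (par x) + 1 = lev x) :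
    ∀ (n : ℕ) (x : V), lev x = n → ∃ p : (parentGraph par).Walk r x, p.length = n := by
  intro n
  induction n with
  | zero =>
    intro x hx
    have hxr : x = r := by
      by_contra hne
      have := hlev x hne
      omega
    subst hxr
    exact ⟨SimpleGraph.Walk.nil, rfl⟩
  | succ n ih =>
    intro x hx
    have hne : x ≠ r := by
      rintro rfl
      omega
    obtain ⟨p, hp⟩ := ih (par x) (by have := hlev x hne; omega)
    exact ⟨p.concat (parentGraph_adj_par hlev hne).symm, by simp [hp]⟩

theorem parentGraph_connected (hr : lev r = 0) (hlev : ∀ x, x ≠ r → lev (par x) + 1 = lev x) :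
    (parentGraph par).Connected := by
  have : Nonempty V := ⟨r⟩
  refine SimpleGraph.Connected.mk fun x y => ?_
  obtain ⟨p, -⟩ := exists_walk_root hr hlev _ x rfl
  obtain ⟨q, -⟩ := exists_walk_root hr hlev _ y rfl
  exact p.reachable.symm.trans q.reachable

/-- The edge from `x` to its parent is a bridge: without it, the set of descendants of `x` is closed
under adjacency, while the parent of `x` lies outside it. -/
theorem parentGraph_isBridge (hlev : ∀ x, x ≠ r → lev (par x) + 1 = lev x) (hpr : par r = r)
    {x : V} (hx : x ≠ r) :
    ¬ ((parentGraph par).deleteEdges {s(x, par x)}).Reachable x (par x) := by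
  have hclosed : ∀ y z, ((parentGraph par).deleteEdges {s(x, par x)}).Adj y z →
      (∃ n, par^[n] y = x) → ∃ n, par^[n] z = x := by
    rintro y z hyz ⟨n, hn⟩
    rw [SimpleGraph.deleteEdges_adj] at hyz
    obtain ⟨hadj, he⟩ := hyz
    rcases ((SimpleGraph.fromRel_adj _ _ _).1 hadj).2 with h | h
    · cases n with
      | zero =>
        exfalso
        apply he
        have hyx : y = x := hn
        rw [h, hyx]
        rfl
      | succ n => exact ⟨n, by rw [h]; exact hn⟩
    · exact ⟨n + 1, by rw [Function.iterate_succ_apply, ← h]; exact hn⟩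
  have hle : ∀ y, lev (par y) ≤ lev y := by
    intro y
    by_cases hy : y = r
    · rw [hy, hpr]
    · have := hlev y hy
      omega
  have hit : ∀ n y, lev (par^[n] y) ≤ lev y := by
    intro n
    induction n with
    | zero => intro y; exact le_rfl
    | succ n ih => intro y; exact (ih (par y)).trans (hle y)
  rintro ⟨p⟩
  have hwalk : ∀ {y z : V} (_ : ((parentGraph par).deleteEdges {s(x, par x)}).Walk y z),
      (∃ n, par^[n] y = x) → ∃ n, par^[n] z = x := by
    intro y z p
    induction p with
    | nil => exact id
    | cons hadj _ ih => exact fun hy => ih (hclosed _ _ hadj hy)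
  obtain ⟨n, hn⟩ := hwalk p ⟨0, rfl⟩
  have h1 := hit n (par x)
  rw [hn] at h1
  have := hlev x hx
  omega

theorem parentGraph_isTree (hr : lev r = 0) (hlev : ∀ x, x ≠ r → lev (par x) + 1 = lev x)
    (hpr : par r = r) : (parentGraph par).IsTree := by
  refine ⟨parentGraph_connected hr hlev, ?_⟩
  rw [SimpleGraph.isAcyclic_iff_forall_adj_isBridge]
  have key : ∀ x y, x ≠ y → y = par x → (parentGraph par).IsBridge s(x, y) := by
    rintro x y hne rfl
    have hx : x ≠ r := by
      rintro rfl
      exact hne hpr.symm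
    rw [SimpleGraph.isBridge_iff]
    exact parentGraph_isBridge hlev hpr hx
  intro x y hxy
  obtain ⟨hne, h | h⟩ := (SimpleGraph.fromRel_adj _ _ _).1 hxy
  · exact key x y hne h
  · rw [Sym2.eq_swap]
    exact key y x hne.symm h

theorem dist_par_le_one (hlev : ∀ x, x ≠ r → lev (par x) + 1 = lev x) (hpr : par r = r) (x : V) :
    (parentGraph par).dist x (par x) ≤ 1 := by
  by_cases hx : x = r
  · rw [hx, hpr]
    simp
  · exact (SimpleGraph.dist_eq_one_iff_adj.2 (parentGraph_adj_par hlev hx)).le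

theorem dist_root_eq {G : SimpleGraph V} (hTG : parentGraph par ≤ G) (hr : lev r = 0)
    (hlev : ∀ x, x ≠ r → lev (par x) + 1 = lev x)
    (hG : ∀ x y, G.Adj x y → lev y ≤ lev x + 1) (x : V) : G.dist r x = lev x := by
  obtain ⟨p, hp⟩ := exists_walk_root hr hlev _ x rfl
  apply le_antisymm
  · have := SimpleGraph.dist_le (p.mapLe hTG)
    simpa [hp] using this
  · have hwalk : ∀ {y z : V} (p : G.Walk y z), lev z ≤ lev y + p.length := by
      intro y z p
      induction p with
      | nil => simp
      | cons hadj _ ih =>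
        have := hG _ _ hadj
        rw [SimpleGraph.Walk.length_cons]
        omega
    obtain ⟨w, hw⟩ := (p.mapLe hTG).reachable.exists_walk_length_eq_dist
    have := hwalk w
    omega

/-- Breadth-first search trees are concentrated at their root. -/
theorem isConcentrated_parentGraph {G : SimpleGraph V} (hTG : parentGraph par ≤ G) (hr : lev r = 0)
    (hlev : ∀ x, x ≠ r → lev (par x) + 1 = lev x)
    (hG : ∀ x y, G.Adj x y → lev y ≤ lev x + 1) : IsConcentrated G (parentGraph par) r := by
  intro i
  have hdist := dist_root_eq hTG hr hlev hG
  have hroot : r ∈ {x : V | G.dist r x ≤ i} := by simp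
  have key : ∀ (n : ℕ) (x : {x : V | G.dist r x ≤ i}), lev x.1 = n →
      ((parentGraph par).induce {x : V | G.dist r x ≤ i}).Reachable ⟨r, hroot⟩ x := by
    intro n
    induction n with
    | zero =>
      intro x hx
      have hxr : x = ⟨r, hroot⟩ := by
        apply Subtype.ext
        by_contra hne
        have := hlev x.1 hne
        omega
      rw [hxr]
    | succ n ih =>
      intro x hx
      have hne : x.1 ≠ r := by
        intro h
        rw [h] at hx
        omega
      have hl := hlev x.1 hne
      have hmem : par x.1 ∈ {x : V | G.dist r x ≤ i} := by
        have hxi : G.dist r x.1 ≤ i := x.2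
        rw [hdist] at hxi
        change G.dist r (par x.1) ≤ i
        rw [hdist]
        omega
      refine (ih ⟨par x.1, hmem⟩ (by change lev (par x.1) = n; omega)).trans ?_
      apply SimpleGraph.Adj.reachable
      exact (parentGraph_adj_par hlev hne).symm
  have : Nonempty {x : V | G.dist r x ≤ i} := ⟨⟨r, hroot⟩⟩
  exact SimpleGraph.Connected.mk fun x y => (key _ x rfl).symm.trans (key _ y rfl)

end ParentGraph

/-- A connected spanning subgraph has stretch at most `t` as soon as this holds for the pairs joined
by an edge. -/
theorem dist_le_mul_of_adj {V : Type*} {G T : SimpleGraph V} {t : ℕ} (hT : T.Connected)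
    (hTG : T ≤ G) (hadj : ∀ x y, G.Adj x y → T.dist x y ≤ t) (u w : V) :
    T.dist u w ≤ t * G.dist u w := by
  have hwalk : ∀ {y z : V} (p : G.Walk y z), T.dist y z ≤ t * p.length := by
    intro y z p
    induction p with
    | nil => simp
    | @cons x y z h p ih =>
      have h1 := hadj _ _ h
      have h2 := hT.dist_triangle (u := x) (v := y) (w := z)
      rw [SimpleGraph.Walk.length_cons, Nat.mul_succ]
      omega
  obtain ⟨w, hw⟩ := ((hT.mono hTG).preconnected u w).exists_walk_length_eq_dist
  rw [← hw]
  exact hwalk w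

/-! ### The parent function of the reduction graph -/

/-- The distance from the central vertex. -/
def level : RVert → ℕ
  | RVert.qp => 2
  | RVert.pp => 1
  | RVert.vv => 0
  | RVert.pm => 1
  | RVert.qm => 2
  | RVert.var b _ => 2 * b.length + 3
  | RVert.varC b _ _ => 2 * b.length + 3
  | RVert.q b _ _ => 2 * b.length + 4

/-- `v_⊕` or `v_⊖` of the block `b`, according to a truth value. -/
def vsign (s : Bool) (b : BlockAddr) : RVert := if s then vplus b else vminus b

/-- The polarity of the variable `x` in the clause `c` (that of the third variable if `x` does not
occur in `c`). -/
def polarity (c : Clause3) (x : ℕ) : Bool :=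
  if x = c.v1 then c.p1 else if x = c.v2 then c.p2 else c.p3

/-- The variable of the first literal of `c` made true by `a` (the third one if none is). -/
def satVar (a : ℕ → Bool) (c : Clause3) : ℕ :=
  if a c.v1 = c.p1 then c.v1 else if a c.v2 = c.p2 then c.v2 else c.v3

/-- The row of `M` of the parent of `q_l`: of the two rows belonging to the variable `satVar a c`,
the one with a one in column `l`. -/
def satRow (a : ℕ → Bool) (c : Clause3) (l : Fin 8) : Fin 6 :=
  if a c.v1 = c.p1 then (if Mmat 0 l then 0 else 1)
  else if a c.v2 = c.p2 then (if Mmat 2 l then 2 else 3)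
  else (if Mmat 4 l then 4 else 5)

/-- The parent in the tree built from the assignment `a`; the root `v` is its own parent. -/
def parent (a : ℕ → Bool) : RVert → RVert
  | RVert.qp => RVert.pp
  | RVert.pp => RVert.vv
  | RVert.vv => RVert.vv
  | RVert.pm => RVert.vv
  | RVert.qm => RVert.pm
  | RVert.var b x => vsign (a x) b
  | RVert.varC b c x => vsign (polarity c x) b
  | RVert.q b c l => gvec b c (satRow a c l)

theorem level_vplus (b : BlockAddr) : level (vplus b) = 2 * b.length + 2 := by
  rcases b with _ | ⟨⟨c, r⟩, b⟩ <;> simp [vplus, level]; omega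

theorem level_vminus (b : BlockAddr) : level (vminus b) = 2 * b.length + 2 := by
  rcases b with _ | ⟨⟨c, r⟩, b⟩ <;> simp [vminus, level]; omega

theorem level_vsign (s : Bool) (b : BlockAddr) : level (vsign s b) = 2 * b.length + 2 := by
  cases s <;> simp [vsign, level_vplus, level_vminus]

theorem level_gvec (b : BlockAddr) (c : Clause3) (k : Fin 6) :
    level (gvec b c k) = 2 * b.length + 3 := by
  fin_cases k <;> rfl

theorem level_parent (a : ℕ → Bool) (x : RVert) (hx : x ≠ RVert.vv) :
    level (parent a x) + 1 = level x := by
  cases x <;> simp_all only [parent, level_vsign, level_gvec, ne_eq, not_true_eq_false] <;> rfl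

/-- Every edge of the graph joins consecutive levels. -/
theorem level_of_baseAdj {u w : RVert} (h : baseAdj u w) :
    level w ≤ level u + 1 ∧ level u ≤ level w + 1 := by
  rcases h with ⟨rfl, rfl⟩ | ⟨rfl, rfl⟩ | ⟨rfl, rfl⟩ | ⟨rfl, rfl⟩ | ⟨b, x, rfl, rfl | rfl⟩ |
    ⟨b, c, k, l, -, rfl, rfl⟩ | ⟨b, c, ⟨rfl, rfl⟩ | ⟨rfl, rfl⟩ | ⟨rfl, rfl⟩⟩
  all_goals try split_ifs
  all_goals try simp only [level_vplus, level_vminus, level_gvec]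
  all_goals simp only [level]
  all_goals omega

theorem Mmat_satRow (a : ℕ → Bool) (c : Clause3) (l : Fin 8) : Mmat (satRow a c l) l = true := by
  unfold satRow
  split_ifs <;> first | assumption | (revert l; decide)

section Valid

variable {φ : SAT3} {h : ℕ} {a : ℕ → Bool}

theorem validVert_vsign {b : BlockAddr} (hb : validBlock φ h b) (s : Bool) :
    validVert φ h (vsign s b) := by
  rcases b with _ | ⟨⟨c, r⟩, b⟩
  · cases s <;> simp [vsign, vplus, vminus, validVert]
  · have hb' : validBlock φ h b ∧ c ∈ φ.clauses := by
      obtain ⟨h1, h2⟩ := hb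
      simp only [List.length_cons] at h1
      exact ⟨⟨by omega, fun p hp => h2 p (List.mem_cons_of_mem _ hp)⟩, h2 (c, r) (by simp)⟩
    cases s <;> simpa [vsign, vplus, vminus, validVert] using hb'

theorem validVert_gvec {b : BlockAddr} (hb : validBlock φ h b) {c : Clause3} (hc : c ∈ φ.clauses)
    (k : Fin 6) : validVert φ h (gvec b c k) := by
  have hv : ∀ x, c.hasVar x → x ∈ φ.vars := fun x hx =>
    Finset.mem_biUnion.2 ⟨c, hc, by simpa [Clause3.hasVar] using hx⟩
  have h1 : c.hasVar c.v1 := Or.inl rfl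
  have h2 : c.hasVar c.v2 := Or.inr (Or.inl rfl)
  have h3 : c.hasVar c.v3 := Or.inr (Or.inr rfl)
  fin_cases k
  · exact ⟨hb, hv _ h1⟩
  · exact ⟨hb, hc, h1⟩
  · exact ⟨hb, hv _ h2⟩
  · exact ⟨hb, hc, h2⟩
  · exact ⟨hb, hv _ h3⟩
  · exact ⟨hb, hc, h3⟩

theorem validVert_parent (a : ℕ → Bool) {x : RVert} (hx : validVert φ h x) :
    validVert φ h (parent a x) := by
  cases x with
  | var b x => exact validVert_vsign hx.1 _
  | varC b c x => exact validVert_vsign hx.1 _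
  | q b c l => exact validVert_gvec hx.1 hx.2 _
  | _ => trivial

theorem polarity_v1 (c : Clause3) : polarity c c.v1 = c.p1 := by simp [polarity]

theorem polarity_v2 {c : Clause3} (hc : c ∈ φ.clauses) : polarity c c.v2 = c.p2 := by
  simp [polarity, (φ.distinct c hc).1.symm]

theorem polarity_v3 {c : Clause3} (hc : c ∈ φ.clauses) : polarity c c.v3 = c.p3 := by
  simp [polarity, (φ.distinct c hc).2.1.symm, (φ.distinct c hc).2.2.symm]

theorem baseAdj_parent (a : ℕ → Bool) {x : RVert} (hx : validVert φ h x) (hne : x ≠ RVert.vv) :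
    baseAdj x (parent a x) ∨ baseAdj (parent a x) x := by
  cases x with
  | qp => simp [baseAdj, parent]
  | pp => simp [baseAdj, parent]
  | vv => exact absurd rfl hne
  | pm => simp [baseAdj, parent]
  | qm => simp [baseAdj, parent]
  | var b x =>
    refine Or.inl (Or.inr (Or.inr (Or.inr (Or.inr (Or.inl ⟨b, x, rfl, ?_⟩)))))
    cases hax : a x <;> simp [parent, vsign, hax]
  | varC b c x =>
    refine Or.inl (Or.inr (Or.inr (Or.inr (Or.inr (Or.inr (Or.inr ⟨b, c, ?_⟩))))))
    obtain ⟨-, hc, rfl | rfl | rfl⟩ := hx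
    · exact Or.inl ⟨rfl, by rw [parent, polarity_v1, vsign]⟩
    · exact Or.inr (Or.inl ⟨rfl, by rw [parent, polarity_v2 hc, vsign]⟩)
    · exact Or.inr (Or.inr ⟨rfl, by rw [parent, polarity_v3 hc, vsign]⟩)
  | q b c l =>
    exact Or.inr (Or.inr (Or.inr (Or.inr (Or.inr (Or.inr (Or.inl
      ⟨b, c, satRow a c l, l, Mmat_satRow a c l, rfl, rfl⟩))))))

/-- The parent of `g_k` is `v_⊕` or `v_⊖`. -/
theorem parent_gvec (a : ℕ → Bool) (b : BlockAddr) (c : Clause3) (k : Fin 6) :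
    ∃ s, parent a (gvec b c k) = vsign s b := by
  fin_cases k <;> exact ⟨_, rfl⟩

/-- All `q_{l,c}^b` have the same grandparent, because the chosen literal of `c` is true. -/
theorem parent_parent_q (hsat : φ.satisfiedBy a) (b : BlockAddr) {c : Clause3}
    (hc : c ∈ φ.clauses) (l : Fin 8) :
    parent a (parent a (RVert.q b c l)) = vsign (a (satVar a c)) b := by
  have hs := hsat c hc
  unfold Clause3.satisfiedBy at hs
  have e1 := polarity_v1 c
  have e2 := polarity_v2 hc
  have e3 := polarity_v3 hc
  simp only [parent, satRow, satVar]
  split_ifs <;> simp_all [gvec]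

/-! ### The tree and its stretch -/

/-- The parent function on the vertices of `reduction(φ, h)`. -/
def redParent (φ : SAT3) (h : ℕ) (a : ℕ → Bool) (x : RedVert φ h) : RedVert φ h :=
  ⟨parent a x.1, validVert_parent a x.2⟩

/-- The spanning tree of `reduction(φ, h)` built from the assignment `a`. -/
def redTree (φ : SAT3) (h : ℕ) (a : ℕ → Bool) : SimpleGraph (RedVert φ h) :=
  parentGraph (redParent φ h a)

theorem level_redParent (x : RedVert φ h) (hx : x ≠ centralVert φ h) :
    level (redParent φ h a x).1 + 1 = level x.1 :=
  level_parent a x.1 fun e => hx (Subtype.ext e)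

theorem redTree_le : redTree φ h a ≤ reductionGraph φ h := by
  have key : ∀ x : RedVert φ h, x ≠ redParent φ h a x →
      (reductionGraph φ h).Adj x (redParent φ h a x) := by
    intro x hne
    refine (SimpleGraph.fromRel_adj _ _ _).2 ⟨fun e => hne (Subtype.ext e), ?_⟩
    refine baseAdj_parent a x.2 fun e => hne (Subtype.ext ?_)
    change x.1 = parent a x.1
    rw [e]
    rfl
  intro x y hxy
  obtain ⟨hne, e | e⟩ := (SimpleGraph.fromRel_adj _ _ _).1 hxy
  · subst e
    exact key x hne
  · subst e
    exact (key y hne.symm).symm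

theorem level_of_adj {x y : RedVert φ h} (hxy : (reductionGraph φ h).Adj x y) :
    level y.1 ≤ level x.1 + 1 := by
  obtain ⟨-, e | e⟩ := (SimpleGraph.fromRel_adj _ _ _).1 hxy
  · exact (level_of_baseAdj e).1
  · exact (level_of_baseAdj e).2

theorem redTree_connected : (redTree φ h a).Connected :=
  parentGraph_connected (r := centralVert φ h) (lev := fun x => level x.1) rfl level_redParent

theorem redTree_isTree : (redTree φ h a).IsTree :=
  parentGraph_isTree (r := centralVert φ h) (lev := fun x => level x.1) rfl level_redParent rfl

theorem dist_redParent (x : RedVert φ h) : (redTree φ h a).dist x (redParent φ h a x) ≤ 1 :=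
  dist_par_le_one (r := centralVert φ h) (lev := fun x => level x.1) level_redParent rfl x

theorem dist_redParent_redParent (x : RedVert φ h) :
    (redTree φ h a).dist x (redParent φ h a (redParent φ h a x)) ≤ 2 := by
  have h1 := dist_redParent (a := a) x
  have h2 := dist_redParent (a := a) (redParent φ h a x)
  have h3 := (redTree_connected (a := a)).dist_triangle (u := x) (v := redParent φ h a x)
    (w := redParent φ h a (redParent φ h a x))
  omega

theorem dist_le_four_of_grandparent {x y : RedVert φ h}
    (hxy : parent a (parent a x.1) = parent a (parent a y.1)) : (redTree φ h a).dist x y ≤ 4 := by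
  have e : redParent φ h a (redParent φ h a x) = redParent φ h a (redParent φ h a y) :=
    Subtype.ext hxy
  have h1 := dist_redParent_redParent (a := a) x
  have h2 := dist_redParent_redParent (a := a) y
  have h3 := (redTree_connected (a := a)).dist_triangle (u := x)
    (v := redParent φ h a (redParent φ h a x)) (w := y)
  rw [← e, SimpleGraph.dist_comm] at h2
  omega

/-- The vertices `v_⊕` and `v_⊖` of a block have a common grandparent in the tree. -/
theorem dist_vplus_vminus (hsat : φ.satisfiedBy a) {b : BlockAddr} (hb : validBlock φ h b)
    {x y : RedVert φ h} (hx : x.1 = vplus b) (hy : y.1 = vminus b) :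
    (redTree φ h a).dist x y ≤ 4 := by
  apply dist_le_four_of_grandparent
  rw [hx, hy]
  rcases b with _ | ⟨⟨c, r⟩, b⟩
  · rfl
  · have hc : c ∈ φ.clauses := hb.2 (c, r) (by simp)
    simp only [vplus, vminus]
    rw [parent_parent_q hsat b hc, parent_parent_q hsat b hc]

theorem dist_vsign (hsat : φ.satisfiedBy a) {b : BlockAddr} (hb : validBlock φ h b) {s t : Bool}
    {x y : RedVert φ h} (hx : x.1 = vsign s b) (hy : y.1 = vsign t b) :
    (redTree φ h a).dist x y ≤ 4 := by
  cases s <;> cases t <;> simp only [vsign, if_true, Bool.false_eq_true, if_false] at hx hy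
  · rw [Subtype.ext (hx.trans hy.symm), SimpleGraph.dist_self]
    omega
  · rw [SimpleGraph.dist_comm]
    exact dist_vplus_vminus hsat hb hy hx
  · exact dist_vplus_vminus hsat hb hx hy
  · rw [Subtype.ext (hx.trans hy.symm), SimpleGraph.dist_self]
    omega

theorem dist_of_baseAdj (hsat : φ.satisfiedBy a) {x y : RedVert φ h} (hxy : baseAdj x.1 y.1) :
    (redTree φ h a).dist x y ≤ 7 := by
  have hpar : ∀ {x y : RedVert φ h}, y.1 = parent a x.1 → (redTree φ h a).dist x y ≤ 7 := by
    intro x y e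
    have e' : y = redParent φ h a x := Subtype.ext e
    rw [e']
    exact (dist_redParent x).trans (by omega)
  have hvar : ∀ {b : BlockAddr} {z : ℕ} {s : Bool}, x.1 = RVert.var b z → y.1 = vsign s b →
      (redTree φ h a).dist x y ≤ 7 := by
    intro b z s hx hy
    have hb : validBlock φ h b := by
      have := x.2
      rw [hx] at this
      exact this.1
    have h1 := dist_redParent (a := a) x
    have h2 : (redTree φ h a).dist (redParent φ h a x) y ≤ 4 :=
      dist_vsign hsat hb (s := a z) (by
      change parent a x.1 = _
      rw [hx, parent]) hy
    have h3 := (redTree_connected (a := a)).dist_triangle (u := x) (v := redParent φ h a x) (w := y)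
    omega
  have hvarC : ∀ {b : BlockAddr} {c : Clause3} {z : ℕ}, x.1 = RVert.varC b c z →
      c ∈ φ.clauses := by
    intro b c z hx
    have := x.2
    rw [hx] at this
    exact this.2.1
  rcases hxy with ⟨hx, hy⟩ | ⟨hx, hy⟩ | ⟨hx, hy⟩ | ⟨hx, hy⟩ | ⟨b, z, hx, hy | hy⟩ |
    ⟨b, c, k, l, -, hx, hy⟩ | ⟨b, c, ⟨hx, hy⟩ | ⟨hx, hy⟩ | ⟨hx, hy⟩⟩
  · exact hpar (by rw [hx, hy, parent])
  · exact hpar (by rw [hx, hy, parent])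
  · rw [SimpleGraph.dist_comm]
    exact hpar (by rw [hx, hy, parent])
  · rw [SimpleGraph.dist_comm]
    exact hpar (by rw [hx, hy, parent])
  · exact hvar (s := true) hx hy
  · exact hvar (s := false) hx hy
  · have hv : validBlock φ h b ∧ c ∈ φ.clauses := by
      have := y.2
      rw [hy] at this
      exact this
    obtain ⟨s, hs⟩ := parent_gvec a b c k
    have h1 := dist_redParent (a := a) x
    have h2 := dist_redParent_redParent (a := a) y
    have h3 : (redTree φ h a).dist (redParent φ h a x) (redParent φ h a (redParent φ h a y)) ≤ 4 :=
      dist_vsign hsat hv.1 (s := s) (t := a (satVar a c)) (by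
        change parent a x.1 = _
        rw [hx, hs]) (by
        change parent a (parent a y.1) = _
        rw [hy, parent_parent_q hsat b hv.2])
    have h4 := (redTree_connected (a := a)).dist_triangle (u := x) (v := redParent φ h a x)
      (w := redParent φ h a (redParent φ h a y))
    have h5 := (redTree_connected (a := a)).dist_triangle (u := x)
      (v := redParent φ h a (redParent φ h a y)) (w := y)
    rw [SimpleGraph.dist_comm] at h2
    omega
  · exact hpar (by rw [hx, hy, parent, polarity_v1, vsign])
  · exact hpar (by rw [hx, hy, parent, polarity_v2 (hvarC hx), vsign])
  · exact hpar (by rw [hx, hy, parent, polarity_v3 (hvarC hx), vsign])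

theorem dist_of_adj (hsat : φ.satisfiedBy a) (x y : RedVert φ h)
    (hxy : (reductionGraph φ h).Adj x y) : (redTree φ h a).dist x y ≤ 7 := by
  obtain ⟨-, e | e⟩ := (SimpleGraph.fromRel_adj _ _ _).1 hxy
  · exact dist_of_baseAdj hsat e
  · rw [SimpleGraph.dist_comm]
    exact dist_of_baseAdj hsat e

end Valid

/-- For every satisfiable 3-SAT instance `φ` and every integer `h > 1`,
the graph `G = reduction(φ, h)` admits a `v`-concentrated tree 7-spanner, where `v` is the
central vertex of the initial path of the construction. -/
theorem reduction_admits_concentrated_tree_7_spanner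
    (φ : SAT3) (hsat : ∃ a : ℕ → Bool, φ.satisfiedBy a) (h : ℕ) (hh : 1 < h) :
    ∃ T : SimpleGraph (RedVert φ h),
      IsTreeSpanner (reductionGraph φ h) T 7 ∧
      IsConcentrated (reductionGraph φ h) T (centralVert φ h) := by
  obtain ⟨a, ha⟩ := hsat
  exact ⟨redTree φ h a,
    ⟨redTree_le, redTree_isTree,
      dist_le_mul_of_adj redTree_connected redTree_le (dist_of_adj ha)⟩,
    isConcentrated_parentGraph (lev := fun x => level x.1) redTree_le rfl level_redParent
      fun _ _ => level_of_adj⟩
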